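/- arXiv:2209.14283 — 5 statements merged into one kernel-verified Lean document; each statement's English description precedes it below -/
import Mathlib

section
/- Let G be a directed acyclic graph on a finite vertex set V partitioned into disjoint nonempty sets 𝐗 and 𝐘, and assume G is unidirectional from 𝐗 to 𝐘. Then every path between two vertices Yk, Yl ∈ 𝐘 that contains at least one vertex of 𝐗 contains a vertex of 𝐗 that is a non-collider on that path; consequently every such path is blocked by any conditioning set containing 𝐗. -/
open MeasureTheory ProbabilityTheory

namespace VecCI

variable {V : Type*}

/-- Undirected adjacency of the edge relation `E`. -/
def Adj (E : V → V → Prop) (u v : V) : Prop := E u v ∨ E v u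

/-- `p` is a path from `a` to `b`: a list of pairwise distinct vertices, starting at `a`,
ending at `b`, with at least two vertices, consecutive vertices being adjacent. -/
def IsPath (E : V → V → Prop) (p : List V) (a b : V) : Prop :=
  p.Nodup ∧ 2 ≤ p.length ∧ p.head? = some a ∧ p.getLast? = some b ∧ p.Chain' (Adj E)

/-- Index `i` is an interior position of the path `p`. -/
def Interior (p : List V) (i : ℕ) : Prop := 0 < i ∧ i + 1 < p.length

/-- The vertex at interior position `i` of `p` is a collider: both adjacent edges point into it. -/
def ColliderAt (E : V → V → Prop) (p : List V) (i : ℕ) : Prop :=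
  Interior p i ∧
    ∃ u v w, p[i - 1]? = some u ∧ p[i]? = some v ∧ p[i + 1]? = some w ∧ E u v ∧ E w v

/-- The vertex at interior position `i` of `p` is a non-collider. -/
def NonColliderAt (E : V → V → Prop) (p : List V) (i : ℕ) : Prop :=
  Interior p i ∧ ¬ ColliderAt E p i

/-- `d` is a descendant of `c`: `d = c` or there is a directed path from `c` to `d`. -/
def Descendant (E : V → V → Prop) (c d : V) : Prop := Relation.ReflTransGen E c d

/-- A set `S` blocks a path `p` if some interior non-collider of `p` lies in `S`, or some
collider of `p` has no descendant in `S`. -/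
def Blocked (E : V → V → Prop) (S : Set V) (p : List V) : Prop :=
  (∃ i v, NonColliderAt E p i ∧ p[i]? = some v ∧ v ∈ S) ∨
  (∃ i v, ColliderAt E p i ∧ p[i]? = some v ∧ ∀ d, Descendant E v d → d ∉ S)

/-- `S` d-separates `a` and `b`: every path between them is blocked by `S`. -/
def DSep (E : V → V → Prop) (S : Set V) (a b : V) : Prop :=
  ∀ p : List V, IsPath E p a b → Blocked E S p

/-- `E` admits no directed cycle. -/
def Acyclic (E : V → V → Prop) : Prop := ∀ v, ¬ Relation.TransGen E v v

/-- `E` has no edge from `Ys` to `Xs`. -/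
def Unidirectional (E : V → V → Prop) (Xs Ys : Set V) : Prop :=
  ∀ x ∈ Xs, ∀ y ∈ Ys, ¬ E y x

/-!
The path starts outside `Xs`, so somewhere it steps from a vertex of `Ys` to a vertex of `Xs`. By
unidirectionality the edge traversed there points out of `Xs`, so the vertex of `Xs` is not a
collider; it is interior because the last vertex of the path lies in `Ys`.
-/

section

variable {E : V → V → Prop} {s Xs S : Set V} {p : List V} {a b u v : V} {i : ℕ}

theorem exists_getElem?_notMem_getElem?_succ_mem (hhead : p.head? = some a) (ha : a ∉ s)
    (hmem : ∃ v ∈ s, v ∈ p) :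
    ∃ i u v, p[i]? = some u ∧ p[i + 1]? = some v ∧ u ∉ s ∧ v ∈ s := by
  by_contra! hstay
  have hchain : p.IsChain (fun u v => u ∉ s → v ∉ s) :=
    List.isChain_iff_getElem.2 fun i hi =>
      hstay i _ _ (List.getElem?_eq_getElem (by lia)) (List.getElem?_eq_getElem hi)
  obtain ⟨v, hvs, hvp⟩ := hmem
  refine hchain.induction (· ∉ s) p (fun _ _ hcarry => hcarry) (fun hp => ?_) v hvp hvs
  rwa [(List.head_eq_iff_head?_eq_some hp).2 hhead]

theorem interior_succ_of_getLast?_ne (hv : p[i + 1]? = some v) (hlast : p.getLast? ≠ some v) :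
    Interior p (i + 1) := by
  have hlt : i + 1 < p.length := (List.getElem?_eq_some_iff.1 hv).1
  have hne : i + 1 ≠ p.length - 1 := fun h =>
    hlast (by rw [List.getLast?_eq_getElem?, ← h, hv])
  exact ⟨i.succ_pos, by lia⟩

theorem nonColliderAt_succ_of_not_edge (hint : Interior p (i + 1)) (hu : p[i]? = some u)
    (hv : p[i + 1]? = some v) (hedge : ¬ E u v) : NonColliderAt E p (i + 1) := by
  refine ⟨hint, ?_⟩
  rintro ⟨_, u', v', _, hu', hv', _, hedge', _⟩
  obtain rfl : u = u' := Option.some.inj (hu.symm.trans hu')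
  obtain rfl : v = v' := Option.some.inj (hv.symm.trans hv')
  exact hedge hedge'

theorem NonColliderAt.blocked (h : NonColliderAt E p i) (hv : p[i]? = some v) (hvS : v ∈ S) :
    Blocked E S p :=
  Or.inl ⟨i, v, h, hv, hvS⟩

theorem exists_nonColliderAt_mem (huni : Unidirectional E Xs Xsᶜ)
    (hhead : p.head? = some a) (ha : a ∉ Xs) (hlast : p.getLast? = some b) (hb : b ∉ Xs)
    (hmem : ∃ v ∈ Xs, v ∈ p) :
    ∃ i v, NonColliderAt E p i ∧ p[i]? = some v ∧ v ∈ Xs := by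
  obtain ⟨i, u, v, hu, hv, huX, hvX⟩ :=
    exists_getElem?_notMem_getElem?_succ_mem hhead ha hmem
  have hlast_ne : p.getLast? ≠ some v := by
    intro h
    obtain rfl : b = v := Option.some.inj (hlast.symm.trans h)
    exact hb hvX
  have hint : Interior p (i + 1) := interior_succ_of_getLast?_ne hv hlast_ne
  exact ⟨i + 1, v, nonColliderAt_succ_of_not_edge hint hu hv (huni v hvX u huX), hv, hvX⟩

theorem stmt_0_general (huni : Unidirectional E Xs Xsᶜ) (ha : a ∉ Xs) (hb : b ∉ Xs)
    (hp : IsPath E p a b) (hthrough : ∃ v ∈ Xs, v ∈ p) :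
    (∃ i v, NonColliderAt E p i ∧ p[i]? = some v ∧ v ∈ Xs) ∧
      ∀ S : Set V, Xs ⊆ S → Blocked E S p := by
  obtain ⟨_, _, hhead, hlast, _⟩ := hp
  obtain ⟨i, v, hnon, hv, hvX⟩ := exists_nonColliderAt_mem huni hhead ha hlast hb hthrough
  exact ⟨⟨i, v, hnon, hv, hvX⟩, fun _ hXS => hnon.blocked hv (hXS hvX)⟩

end

/-- in a DAG unidirectional from `Xs` to `Ys`, every path between two
vertices of `Ys` containing a vertex of `Xs` contains a vertex of `Xs` that is a
non-collider on that path; consequently every such path is blocked by any conditioning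
set containing `Xs`. -/
theorem stmt_0 {V : Type*} [Fintype V] (E : V → V → Prop) (Xs Ys : Set V)
    (hcover : Xs ∪ Ys = Set.univ) (hdisj : Disjoint Xs Ys)
    (hXne : Xs.Nonempty) (hYne : Ys.Nonempty)
    (hirr : Irreflexive E) (hacyc : Acyclic E)
    (huni : Unidirectional E Xs Ys)
    (Yk Yl : V) (hYk : Yk ∈ Ys) (hYl : Yl ∈ Ys)
    (p : List V) (hp : IsPath E p Yk Yl) (hthrough : ∃ v ∈ Xs, v ∈ p) :
    (∃ i v, NonColliderAt E p i ∧ p[i]? = some v ∧ v ∈ Xs) ∧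
      ∀ S : Set V, Xs ⊆ S → Blocked E S p := by
  obtain rfl : Xsᶜ = Ys := IsCompl.compl_eq ⟨hdisj, codisjoint_iff.2 hcover⟩
  exact stmt_0_general huni hYk hYl hp hthrough

end VecCI
end

section
/- Let G be a directed acyclic graph on a finite vertex set V partitioned into disjoint nonempty sets 𝐗 and 𝐘, unidirectional from 𝐗 to 𝐘. Then every descendant of a vertex of 𝐘 lies in 𝐘, every path between two vertices Xi, Xj ∈ 𝐗 that contains a vertex of 𝐘 contains a collider lying in 𝐘, and consequently every such path is blocked by every conditioning set S ⊆ 𝐗 \ {Xi, Xj}. -/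
open MeasureTheory ProbabilityTheory

namespace VecCI

variable {V : Type*}

/-!
No edge leaves `Ys`, so a walk can only enter `Ys` along an edge pointing into it. Once such an
edge has been traversed, the walk stays in `Ys` as long as it follows edges forwards; since it must
end outside `Ys`, it meets a reversed edge, and the first one creates a collider in `Ys`. All
descendants of that collider lie in `Ys`, hence outside every conditioning set disjoint from `Ys`.
-/

section Walks

variable {E : V → V → Prop} {Ys S : Set V} {p l : List V} {a b u v w : V} {i : ℕ}

/-- `p` is a walk from `a` to `b` in the undirected graph underlying `E`: a path without the
requirement that its vertices be distinct. It is encoded by its list of vertices, a single vertex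
being a walk of length zero. -/
def IsWalk (E : V → V → Prop) (p : List V) (a b : V) : Prop :=
  p.head? = some a ∧ p.getLast? = some b ∧ p.IsChain (Adj E)

theorem IsPath.isWalk (hp : IsPath E p a b) : IsWalk E p a b :=
  hp.2.2

theorem IsWalk.adj (hp : IsWalk E (u :: v :: l) a b) : Adj E u v :=
  hp.2.2.rel

theorem IsWalk.tail (hp : IsWalk E (u :: v :: l) a b) : IsWalk E (v :: l) v b :=
  ⟨rfl, by simpa only [List.getLast?_cons_cons] using hp.2.1, hp.2.2.tail⟩

theorem colliderAt_one (huv : E u v) (hwv : E w v) : ColliderAt E (u :: v :: w :: l) 1 :=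
  ⟨⟨Nat.one_pos, by simp⟩, u, v, w, rfl, rfl, rfl, huv, hwv⟩

theorem ColliderAt.cons (h : ColliderAt E p i) (a : V) : ColliderAt E (a :: p) (i + 1) := by
  obtain ⟨⟨hpos, hlt⟩, u, v, w, hu, hv, hw, huv, hwv⟩ := h
  refine ⟨⟨i.succ_pos, Nat.succ_lt_succ hlt⟩, u, v, w, ?_, hv, hw, huv, hwv⟩
  -- For `0 < i` the truncated index `i - 1` shifts along with the list.
  obtain ⟨j, rfl⟩ := Nat.exists_eq_add_one.mpr hpos
  exact hu

theorem Unidirectional.mem_of_edge (hE : Unidirectional E Ysᶜ Ys) (hu : u ∈ Ys) (huv : E u v) :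
    v ∈ Ys :=
  by_contra fun hv => hE v hv u hu huv

theorem Unidirectional.mem_of_descendant (hE : Unidirectional E Ysᶜ Ys) (hu : u ∈ Ys)
    (huv : Descendant E u v) : v ∈ Ys := by
  induction huv with
  | refl => exact hu
  | tail _ hedge ih => exact hE.mem_of_edge ih hedge

theorem Unidirectional.exists_colliderAt_of_entering_edge (hE : Unidirectional E Ysᶜ Ys)
    (hp : IsWalk E (u :: v :: l) a b) (huv : E u v) (hv : v ∈ Ys) (hb : b ∉ Ys) :
    ∃ i c, ColliderAt E (u :: v :: l) i ∧ (u :: v :: l)[i]? = some c ∧ c ∈ Ys := by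
  induction l generalizing a u v with
  | nil =>
    obtain rfl : v = b := Option.some.inj hp.2.1
    exact absurd hv hb
  | cons w l ih =>
    rcases hp.tail.adj with hvw | hwv
    · obtain ⟨i, c, hcol, hc, hcY⟩ := ih hp.tail hvw (hE.mem_of_edge hv hvw)
      exact ⟨i + 1, c, hcol.cons u, hc, hcY⟩
    · exact ⟨1, v, colliderAt_one huv hwv, rfl, hv⟩

theorem Unidirectional.exists_colliderAt (hE : Unidirectional E Ysᶜ Ys) (hp : IsWalk E p a b)
    (ha : a ∉ Ys) (hb : b ∉ Ys) (hpY : ∃ y ∈ Ys, y ∈ p) :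
    ∃ i c, ColliderAt E p i ∧ p[i]? = some c ∧ c ∈ Ys := by
  induction p generalizing a with
  | nil => simp at hpY
  | cons u l ih =>
    obtain rfl : u = a := Option.some.inj hp.1
    obtain ⟨y, hy, hyp⟩ := hpY
    have hyl : y ∈ l := (List.mem_cons.mp hyp).resolve_left fun h => ha (h ▸ hy)
    obtain _ | ⟨v, l⟩ := l
    · simp at hyl
    by_cases hv : v ∈ Ys
    · have huv : E u v := hp.adj.resolve_right fun hvu => ha (hE.mem_of_edge hv hvu)
      exact hE.exists_colliderAt_of_entering_edge hp huv hv hb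
    · obtain ⟨i, c, hcol, hc, hcY⟩ := ih hp.tail hv ⟨y, hy, hyl⟩
      exact ⟨i + 1, c, hcol.cons u, hc, hcY⟩

theorem Unidirectional.blocked_of_colliderAt (hE : Unidirectional E Ysᶜ Ys)
    (hcol : ColliderAt E p i) (hv : p[i]? = some v) (hvY : v ∈ Ys) (hS : S ⊆ Ysᶜ) :
    Blocked E S p :=
  Or.inr ⟨i, v, hcol, hv, fun _ hd hdS => hS hdS (hE.mem_of_descendant hvY hd)⟩

end Walks

theorem stmt_3_general {E : V → V → Prop} {Ys : Set V}
    (hE : Unidirectional E Ysᶜ Ys) :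
    (∀ y ∈ Ys, ∀ d, Descendant E y d → d ∈ Ys) ∧
    ∀ a b : V, a ∉ Ys → b ∉ Ys →
      ∀ p : List V, IsWalk E p a b → (∃ v ∈ Ys, v ∈ p) →
        (∃ i v, ColliderAt E p i ∧ p[i]? = some v ∧ v ∈ Ys) ∧
        ∀ S : Set V, S ⊆ Ysᶜ → Blocked E S p := by
  refine ⟨fun y hy d => hE.mem_of_descendant hy, fun a b ha hb p hp hpY => ?_⟩
  obtain ⟨i, v, hcol, hv, hvY⟩ := hE.exists_colliderAt hp ha hb hpY
  exact ⟨⟨i, v, hcol, hv, hvY⟩, fun S => hE.blocked_of_colliderAt hcol hv hvY⟩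

/-- in a DAG unidirectional from `Xs` to `Ys`, every descendant of a
vertex of `Ys` lies in `Ys`; every path between two vertices of `Xs` containing a
vertex of `Ys` contains a collider lying in `Ys`, and consequently every such path is
blocked by every conditioning set `S ⊆ Xs \ {Xi, Xj}`. -/
theorem stmt_3 {V : Type*} [Fintype V] (E : V → V → Prop) (Xs Ys : Set V)
    (hcover : Xs ∪ Ys = Set.univ) (hdisj : Disjoint Xs Ys)
    (hXne : Xs.Nonempty) (hYne : Ys.Nonempty)
    (hirr : Irreflexive E) (hacyc : Acyclic E)
    (huni : Unidirectional E Xs Ys) :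
    (∀ y ∈ Ys, ∀ d, Descendant E y d → d ∈ Ys) ∧
    ∀ Xi Xj : V, Xi ∈ Xs → Xj ∈ Xs →
      ∀ p : List V, IsPath E p Xi Xj → (∃ v ∈ Ys, v ∈ p) →
        (∃ i v, ColliderAt E p i ∧ p[i]? = some v ∧ v ∈ Ys) ∧
        ∀ S : Set V, S ⊆ Xs \ {Xi, Xj} → Blocked E S p := by
  obtain rfl : Xs = Ysᶜ := (IsCompl.of_eq hdisj.inter_eq hcover).eq_compl
  exact (stmt_3_general huni).imp_right fun h Xi Xj hXi hXj p hp hpY =>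
    (h Xi Xj hXi hXj p hp.isWalk hpY).imp_right fun hblocked S hS =>
      hblocked S (hS.trans Set.sdiff_subset)

end VecCI
end

section
/- Let G be a directed acyclic graph on a finite vertex set V partitioned into disjoint nonempty sets 𝐗 and 𝐘, unidirectional from 𝐗 to 𝐘. Let Xi, Xj ∈ 𝐗 be distinct and S ⊆ 𝐗 \ {Xi, Xj}. If S ∪ 𝐘 d-separates Xi and Xj in G, then S d-separates Xi and Xj in G. Equivalently, if S does not d-separate Xi and Xj, then S ∪ 𝐘 does not d-separate Xi and Xj. -/
open MeasureTheory ProbabilityTheory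

namespace VecCI

variable {V : Type*}

/-!
On a path that `S` does not block, every vertex is an ancestor of `S` or of an endpoint: a collider
has a descendant in `S`, and from any other vertex one follows the arrows of the path until they
stop, at an endpoint or at a collider. Hence conditioning additionally on a set that avoids all
these ancestors cannot hit a non-collider of the path, and enlarging `S` never closes a collider.
When no edge leads from `Ys` to `Xs`, all ancestors of vertices of `Xs` lie in `Xs`, so `Ys` is
such a set.
-/

section

variable {E : V → V → Prop} {S T Xs Ys : Set V} {p : List V} {a b u v : V}

/-- The ancestral set of `S`: the vertices having a descendant in `S`, in particular all of `S`. -/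
def ancestors (E : V → V → Prop) (S : Set V) : Set V := {v | ∃ d ∈ S, Descendant E v d}

theorem subset_ancestors : S ⊆ ancestors E S :=
  fun v hv => ⟨v, hv, .refl⟩

theorem ancestors_mono (hST : S ⊆ T) : ancestors E S ⊆ ancestors E T :=
  fun _ ⟨d, hd, hvd⟩ => ⟨d, hST hd, hvd⟩

theorem mem_ancestors_of_edge (huv : E u v) (hv : v ∈ ancestors E S) : u ∈ ancestors E S :=
  let ⟨d, hd, hvd⟩ := hv
  ⟨d, hd, .head huv hvd⟩

theorem ancestors_subset_of_forall_edge (hS : ∀ u v, E u v → v ∈ S → u ∈ S) :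
    ancestors E S ⊆ S := by
  rintro v ⟨d, hd, hvd⟩
  induction hvd using Relation.ReflTransGen.head_induction_on with
  | refl => exact hd
  | head huv _ hv => exact hS _ _ huv hv

theorem Unidirectional.ancestors_subset (huni : Unidirectional E Xs Ys)
    (hcover : Xs ∪ Ys = Set.univ) : ancestors E Xs ⊆ Xs :=
  ancestors_subset_of_forall_edge fun u v huv hv =>
    (hcover.symm ▸ Set.mem_univ u : u ∈ Xs ∪ Ys).resolve_right fun hu => huni v hv u hu huv

/-- No collider of `p` makes `S` block `p`: every collider lies in the ancestral set of `S`. -/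
def CollidersOpen (E : V → V → Prop) (S : Set V) (p : List V) : Prop :=
  ∀ i v, ColliderAt E p i → p[i]? = some v → v ∈ ancestors E S

theorem collidersOpen_of_not_blocked (hp : ¬ Blocked E S p) : CollidersOpen E S p := by
  intro i v hcol hv
  by_contra hanc
  exact hp (.inr ⟨i, v, hcol, hv, fun d hvd hd => hanc ⟨d, hd, hvd⟩⟩)

theorem CollidersOpen.getElem_mem_ancestors (hopen : CollidersOpen E S p) {k : ℕ}
    (hk : k + 2 < p.length) (hleft : E p[k] p[k + 1]) (hright : E p[k + 2] p[k + 1]) :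
    p[k + 1] ∈ ancestors E S :=
  hopen (k + 1) _ ⟨⟨k.succ_pos, hk⟩, p[k], p[k + 1], p[k + 2],
    by simp, by simp, by simp, hleft, hright⟩ (by simp)

theorem CollidersOpen.mem_ancestors_of_edge_to_succ (hopen : CollidersOpen E S p)
    (hchain : p.IsChain (Adj E)) (hlast : p.getLast? = some b) {k : ℕ} (hk : k + 1 < p.length)
    (hedge : E p[k] p[k + 1]) : p[k + 1] ∈ ancestors E (insert b S) := by
  by_cases hnext : k + 2 < p.length
  · rcases hchain.getElem (k + 1) hnext with hfwd | hbwd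
    · exact mem_ancestors_of_edge hfwd
        (hopen.mem_ancestors_of_edge_to_succ hchain hlast hnext hfwd)
    · exact ancestors_mono (Set.subset_insert b S)
        (hopen.getElem_mem_ancestors hnext hedge hbwd)
  · obtain rfl : p[k + 1] = b := by grind
    exact subset_ancestors (Set.mem_insert _ S)
termination_by p.length - k

theorem CollidersOpen.mem_ancestors_of_edge_from_succ (hopen : CollidersOpen E S p)
    (hchain : p.IsChain (Adj E)) (hhead : p.head? = some a) {k : ℕ} (hk : k + 1 < p.length)
    (hedge : E p[k + 1] p[k]) : p[k] ∈ ancestors E (insert a S) := by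
  induction k with
  | zero =>
    obtain rfl : p[0] = a := by grind [List.head?_eq_getElem?]
    exact subset_ancestors (Set.mem_insert _ S)
  | succ k ih =>
    have hprev : k + 1 < p.length := by omega
    rcases hchain.getElem k hprev with hfwd | hbwd
    · exact ancestors_mono (Set.subset_insert a S) (hopen.getElem_mem_ancestors hk hfwd hedge)
    · exact mem_ancestors_of_edge hbwd (ih hprev hbwd)

theorem IsPath.mem_ancestors (hp : IsPath E p a b) (hopen : CollidersOpen E S p) (hv : v ∈ p) :
    v ∈ ancestors E (S ∪ {a, b}) := by
  obtain ⟨-, -, hhead, hlast, hchain⟩ := hp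
  obtain ⟨_ | k, hi, rfl⟩ := List.getElem_of_mem hv
  · obtain rfl : p[0] = a := by grind [List.head?_eq_getElem?]
    exact subset_ancestors (by simp)
  · rcases hchain.getElem k hi with hfwd | hbwd
    · have hmem := hopen.mem_ancestors_of_edge_to_succ hchain hlast hi hfwd
      exact ancestors_mono (by grind) hmem
    · have hmem := hopen.mem_ancestors_of_edge_from_succ hchain hhead hi hbwd
      exact mem_ancestors_of_edge hbwd (ancestors_mono (by grind) hmem)

theorem stmt_4_general (hT : Disjoint T (ancestors E (S ∪ {a, b}))) (hsep : DSep E (S ∪ T) a b) :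
    DSep E S a b := by
  intro p hp
  by_contra hactive
  rcases hsep p hp with ⟨i, v, hnoncol, hv, hvS | hvT⟩ | ⟨i, v, hcol, hv, hdesc⟩
  · exact hactive (.inl ⟨i, v, hnoncol, hv, hvS⟩)
  · exact Set.disjoint_left.mp hT hvT
      (hp.mem_ancestors (collidersOpen_of_not_blocked hactive) (List.mem_of_getElem? hv))
  · exact hactive (.inr ⟨i, v, hcol, hv, fun d hvd hd => hdesc d hvd (.inl hd)⟩)

end

/-- for distinct `Xi, Xj ∈ Xs` and `S ⊆ Xs \ {Xi, Xj}`, if `S ∪ Ys`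
d-separates `Xi` and `Xj`, then `S` d-separates them. -/
theorem stmt_4 {V : Type*} [Fintype V] (E : V → V → Prop) (Xs Ys : Set V)
    (hcover : Xs ∪ Ys = Set.univ) (hdisj : Disjoint Xs Ys)
    (hXne : Xs.Nonempty) (hYne : Ys.Nonempty)
    (hirr : Irreflexive E) (hacyc : Acyclic E)
    (huni : Unidirectional E Xs Ys)
    (Xi Xj : V) (hXi : Xi ∈ Xs) (hXj : Xj ∈ Xs) (hne : Xi ≠ Xj)
    (S : Set V) (hS : S ⊆ Xs \ {Xi, Xj})
    (hsep : DSep E (S ∪ Ys) Xi Xj) :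
    DSep E S Xi Xj := by
  have hends : S ∪ {Xi, Xj} ⊆ Xs :=
    Set.union_subset (hS.trans Set.sdiff_subset) (Set.pair_subset hXi hXj)
  exact stmt_4_general
    (hdisj.symm.mono_right ((ancestors_mono hends).trans (huni.ancestors_subset hcover))) hsep

end VecCI
end

section
/- (Corollary 1: identifiability under Condition (C1).) Let G be a directed acyclic graph on V = 𝐗 ∪ 𝐘, unidirectional from 𝐗 to 𝐘, and let the joint distribution of random variables (Z_v)_{v ∈ V} be Markov and faithful to G. Assume Condition (C1): there exist distinct Xi, Xj ∈ 𝐗 and S ⊆ 𝐗 \ {Xi, Xj} such that Z_{Xi} and Z_{Xj} are conditionally independent given σ((Z_s)_{s ∈ S}) but conditionally dependent given σ((Z_s)_{s ∈ S ∪ 𝐘}). Then there exists no directed acyclic graph G' on V containing no edge (x, y) with x ∈ 𝐗 and y ∈ 𝐘 (i.e. unidirectional from 𝐘 to 𝐗) to which the joint distribution of (Z_v)_{v ∈ V} is Markov and faithful; hence the causal direction 𝐗 → 𝐘 is identifiable from the observational distribution. -/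
open MeasureTheory ProbabilityTheory

namespace VecCI

variable {V : Type*}

/-- The σ-algebra generated by the family of random variables `(Z s)_{s ∈ S}`. -/
def sigmaOf {Ω : Type*} (Z : V → Ω → ℝ) (S : Set V) : MeasurableSpace Ω :=
  ⨆ s ∈ S, MeasurableSpace.comap (Z s) inferInstance

/-- `Z a` and `Z b` are conditionally independent given the σ-algebra generated by
`(Z s)_{s ∈ S}` (for `S = ∅` this is conditioning on the trivial σ-algebra, i.e.
unconditional independence). -/
def CondIndepGiven {Ω : Type*} [mΩ : MeasurableSpace Ω] [StandardBorelSpace Ω]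
    (μ : Measure Ω) [IsFiniteMeasure μ] (Z : V → Ω → ℝ) (hZ : ∀ v, Measurable (Z v))
    (S : Set V) (a b : V) : Prop :=
  CondIndepFun (sigmaOf Z S) (iSup₂_le fun s _ => measurable_iff_comap_le.mp (hZ s))
    (Z a) (Z b) μ

/-- The joint distribution of `(Z v)_{v ∈ V}` is Markov and faithful to the graph `E`:
for all distinct `a`, `b` and every `S ⊆ V \ {a, b}`, `S` d-separates `a` and `b` in `E`
iff `Z a` and `Z b` are conditionally independent given `σ((Z s)_{s ∈ S})`. -/
def MarkovFaithful {Ω : Type*} [mΩ : MeasurableSpace Ω] [StandardBorelSpace Ω]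
    (E : V → V → Prop) (μ : Measure Ω) [IsFiniteMeasure μ]
    (Z : V → Ω → ℝ) (hZ : ∀ v, Measurable (Z v)) : Prop :=
  ∀ a b : V, a ≠ b → ∀ S : Set V, a ∉ S → b ∉ S →
    (DSep E S a b ↔ CondIndepGiven μ Z hZ S a b)

/-!
If every edge `u → v` with `v ∈ A` starts in `A`, then enlarging a d-separating set `S` by `A`
cannot open a path that starts outside `A`. Such a path could only open at a collider `v` that
acquires a descendant in `A`, and then `v ∈ A` because `A` contains all ancestors of its elements.
But then the vertex preceding `v` on the path is a parent of `v`, hence lies in `A` as well; it is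
not the starting point, and its edge into `v` makes it a non-collider, so it blocks the path.

In a graph with no edge from `Xs` to `Ys` this applies with `A = Ys`, so faithfulness would make
conditioning on `Ys` preserve the conditional independence that (C1) says it destroys.
-/

/-- `A` is an ancestral set of `E`: it contains the parents of its elements, and hence all
their ancestors (`IsAncestral.mem_of_descendant`). -/
def IsAncestral (E : V → V → Prop) (A : Set V) : Prop := ∀ ⦃u v⦄, E u v → v ∈ A → u ∈ A

section DSeparation

variable {E : V → V → Prop} {A S Xs Ys : Set V} {p : List V} {a b c d u v : V} {i : ℕ}

theorem Acyclic.asymm (hE : Acyclic E) : Std.Asymm E :=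
  ⟨fun u _ huv hvu => hE u (.tail (.single huv) hvu)⟩

theorem Unidirectional.isAncestral (hE : Unidirectional E Ys Xs) (hcover : Xs ∪ Ys = Set.univ) :
    IsAncestral E Ys := fun u v huv hv =>
  (hcover.ge (Set.mem_univ u)).resolve_left fun hu => hE v hv u hu huv

theorem IsAncestral.mem_of_descendant (hA : IsAncestral E A) (hcd : Descendant E c d)
    (hd : d ∈ A) : c ∈ A :=
  Relation.ReflTransGen.head_induction_on hcd hd fun huv _ hv => hA huv hv

theorem IsPath.getElem?_zero (hp : IsPath E p a b) : p[0]? = some a :=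
  List.head?_eq_getElem?.symm.trans hp.2.2.1

theorem Interior.nonColliderAt_of_edge_succ [Std.Asymm E] (hi : Interior p i)
    (hu : p[i]? = some u) (hv : p[i + 1]? = some v) (huv : E u v) : NonColliderAt E p i := by
  refine ⟨hi, ?_⟩
  rintro ⟨-, _, u', v', -, hu', hv', -, hvu⟩
  obtain rfl : u = u' := Option.some.inj (hu.symm.trans hu')
  obtain rfl : v = v' := Option.some.inj (hv.symm.trans hv')
  exact Std.Asymm.asymm u v huv hvu

theorem ColliderAt.exists_nonColliderAt_mem [Std.Asymm E] (hA : IsAncestral E A)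
    (hp : IsPath E p a b) (ha : a ∉ A) (hcol : ColliderAt E p i) (hv : p[i]? = some v)
    (hvA : v ∈ A) : ∃ j u, NonColliderAt E p j ∧ p[j]? = some u ∧ u ∈ A := by
  obtain ⟨⟨hi_pos, hi_lt⟩, u, v', _, hu, hv', -, huv, -⟩ := hcol
  obtain rfl : v = v' := Option.some.inj (hv.symm.trans hv')
  obtain ⟨j, rfl⟩ := Nat.exists_eq_succ_of_ne_zero hi_pos.ne'
  replace hu : p[j]? = some u := hu
  have huA : u ∈ A := hA huv hvA
  have hj_pos : 0 < j := by
    refine Nat.pos_of_ne_zero ?_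
    rintro rfl
    have hua : u = a := Option.some.inj (hu.symm.trans hp.getElem?_zero)
    exact ha (hua ▸ huA)
  have hj : Interior p j := ⟨hj_pos, (Nat.lt_succ_self _).trans hi_lt⟩
  exact ⟨j, u, hj.nonColliderAt_of_edge_succ hu hv huv, hu, huA⟩

theorem Blocked.union_of_isAncestral [Std.Asymm E] (hA : IsAncestral E A)
    (hp : IsPath E p a b) (ha : a ∉ A) (hS : Blocked E S p) : Blocked E (S ∪ A) p := by
  rcases hS with ⟨i, v, hnon, hv, hvS⟩ | ⟨i, v, hcol, hv, hdesc⟩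
  · exact .inl ⟨i, v, hnon, hv, .inl hvS⟩
  by_cases hvA : v ∈ A
  · obtain ⟨j, u, hnon, hu, huA⟩ := hcol.exists_nonColliderAt_mem hA hp ha hv hvA
    exact .inl ⟨j, u, hnon, hu, .inr huA⟩
  · refine .inr ⟨i, v, hcol, hv, fun d hvd hd => ?_⟩
    exact hd.elim (hdesc d hvd) fun hdA => hvA (hA.mem_of_descendant hvd hdA)

theorem DSep.union_of_isAncestral [Std.Asymm E] (hA : IsAncestral E A) (ha : a ∉ A)
    (hS : DSep E S a b) : DSep E (S ∪ A) a b :=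
  fun p hp => (hS p hp).union_of_isAncestral hA hp ha

end DSeparation

section Identifiability

variable {Ω : Type*} [mΩ : MeasurableSpace Ω] [StandardBorelSpace Ω]
  {μ : Measure Ω} [IsFiniteMeasure μ] {Z : V → Ω → ℝ} {hZ : ∀ v, Measurable (Z v)}

theorem MarkovFaithful.condIndepGiven_union_of_isAncestral {E : V → V → Prop} [Std.Asymm E]
    (hMF : MarkovFaithful E μ Z hZ) {A S : Set V} (hA : IsAncestral E A) {a b : V} (hab : a ≠ b)
    (ha : a ∉ S ∪ A) (hb : b ∉ S ∪ A) (hci : CondIndepGiven μ Z hZ S a b) :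
    CondIndepGiven μ Z hZ (S ∪ A) a b := by
  have hsep : DSep E S a b := (hMF a b hab S (ha ∘ .inl) (hb ∘ .inl)).mpr hci
  exact (hMF a b hab (S ∪ A) ha hb).mp (hsep.union_of_isAncestral hA (ha ∘ .inr))

theorem stmt_6_general {Ys S : Set V} {Xi Xj : V} (hne : Xi ≠ Xj)
    (hXi : Xi ∉ S ∪ Ys) (hXj : Xj ∉ S ∪ Ys)
    (hci : CondIndepGiven μ Z hZ S Xi Xj)
    (hcd : ¬ CondIndepGiven μ Z hZ (S ∪ Ys) Xi Xj) :
    ¬ ∃ E' : V → V → Prop, Std.Asymm E' ∧ IsAncestral E' Ys ∧ MarkovFaithful E' μ Z hZ := by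
  rintro ⟨E', _, hYs, hMF⟩
  exact hcd (hMF.condIndepGiven_union_of_isAncestral hYs hne hXi hXj hci)

end Identifiability

/-- Corollary 1, identifiability under (C1): if conditioning on `Ys`
creates a dependence between two vertices of `Xs`, then the observational distribution
is Markov and faithful to no DAG that is unidirectional from `Ys` to `Xs`; hence the
causal direction `Xs → Ys` is identifiable. -/
theorem stmt_6 {V : Type*} [Fintype V] (E : V → V → Prop) (Xs Ys : Set V)
    (hcover : Xs ∪ Ys = Set.univ) (hdisj : Disjoint Xs Ys)
    (hXne : Xs.Nonempty) (hYne : Ys.Nonempty)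
    (hirr : Irreflexive E) (hacyc : Acyclic E)
    (huni : Unidirectional E Xs Ys)
    {Ω : Type*} [mΩ : MeasurableSpace Ω] [StandardBorelSpace Ω]
    (μ : Measure Ω) [IsProbabilityMeasure μ]
    (Z : V → Ω → ℝ) (hZ : ∀ v, Measurable (Z v))
    (hMF : MarkovFaithful E μ Z hZ)
    (Xi Xj : V) (hXi : Xi ∈ Xs) (hXj : Xj ∈ Xs) (hne : Xi ≠ Xj)
    (S : Set V) (hS : S ⊆ Xs \ {Xi, Xj})
    (hci : CondIndepGiven μ Z hZ S Xi Xj)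
    (hcd : ¬ CondIndepGiven μ Z hZ (S ∪ Ys) Xi Xj) :
    ¬ ∃ E' : V → V → Prop, Irreflexive E' ∧ Acyclic E' ∧
      (∀ x ∈ Xs, ∀ y ∈ Ys, ¬ E' x y) ∧ MarkovFaithful E' μ Z hZ := by
  rintro ⟨E', -, hacyc', hno_edge, hMF'⟩
  have huni' : Unidirectional E' Ys Xs := fun y hy x hx => hno_edge x hx y hy
  have hXi' : Xi ∉ S ∪ Ys :=
    not_or.mpr ⟨fun h => (hS h).2 (.inl rfl), Set.disjoint_left.mp hdisj hXi⟩
  have hXj' : Xj ∉ S ∪ Ys :=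
    not_or.mpr ⟨fun h => (hS h).2 (.inr rfl), Set.disjoint_left.mp hdisj hXj⟩
  exact stmt_6_general hne hXi' hXj' hci hcd
    ⟨E', hacyc'.asymm, huni'.isAncestral hcover, hMF'⟩

end VecCI
end

section
/- (Lemma 4: graphical characterization of Condition (C2).) Let G be a directed acyclic graph on V = 𝐗 ∪ 𝐘, unidirectional from 𝐗 to 𝐘. Then the following are equivalent: (a) there exist distinct Yk, Yl ∈ 𝐘 and S ⊆ 𝐘 \ {Yk, Yl} such that S does not d-separate Yk and Yl in G but S ∪ 𝐗 d-separates Yk and Yl in G; (b) there exist distinct Yk, Yl ∈ 𝐘, a set S ⊆ 𝐘 \ {Yk, Yl}, and a path p between Yk and Yl such that (i) S d-separates Yk and Yl in the induced subgraph of G on 𝐘 (the graph containing only the vertices of 𝐘 and the edges of G between them), and (ii) p is unblocked by S in G and contains at least one vertex of 𝐗. -/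
open MeasureTheory ProbabilityTheory

namespace VecCI

variable {V : Type*}

/-- The induced subgraph of `E` on the vertex set `W`: only edges of `E` between
vertices of `W`. -/
def Restrict (E : V → V → Prop) (W : Set V) (u v : V) : Prop :=
  E u v ∧ u ∈ W ∧ v ∈ W

/-!
Since no edge leads from `Ys` to `Xs`, descendants of vertices of `Ys` stay in `Ys`, so a path
inside `Ys` is blocked by `S ∪ Xs` exactly when it is blocked by `S`, in `E` or in the induced
subgraph. A path between vertices of `Ys` that meets `Xs` is always blocked by `S ∪ Xs`: its first
vertex in `Xs` is preceded by a vertex of `Ys`, hence is not a collider. So d-separation by `S ∪ Xs`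
in `E` is d-separation by `S` in the induced subgraph, and when it holds, every path between the two
vertices that is unblocked by `S` meets `Xs`.
-/

section

variable {E : V → V → Prop} {W S T : Set V} {p : List V} {a b v d : V} {i : ℕ}

theorem isPath_restrict_iff :
    IsPath (Restrict E W) p a b ↔ IsPath E p a b ∧ ∀ v ∈ p, v ∈ W := by
  constructor
  · rintro ⟨hnodup, hlen, hhead, hlast, hchain⟩
    refine ⟨⟨hnodup, hlen, hhead, hlast, hchain.imp fun _ _ h => h.imp And.left And.left⟩, ?_⟩
    have mem_of_adj {u v : V} (h : Adj (Restrict E W) u v) : u ∈ W ∧ v ∈ W :=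
      h.elim And.right fun h => h.2.symm
    intro v hv
    obtain ⟨i, hi, rfl⟩ := List.mem_iff_getElem.1 hv
    replace hchain := List.isChain_iff_getElem.1 hchain
    cases i with
    | zero => exact (mem_of_adj (hchain 0 hlen)).1
    | succ j => exact (mem_of_adj (hchain j hi)).2
  · rintro ⟨⟨hnodup, hlen, hhead, hlast, hchain⟩, hp⟩
    refine ⟨hnodup, hlen, hhead, hlast, List.isChain_iff_getElem.2 fun i hi => ?_⟩
    have hu : p[i] ∈ W := hp _ (List.getElem_mem _)
    have hv : p[i + 1] ∈ W := hp _ (List.getElem_mem _)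
    exact (List.isChain_iff_getElem.1 hchain i hi).imp (⟨·, hu, hv⟩) (⟨·, hv, hu⟩)

theorem colliderAt_restrict_iff (hp : ∀ v ∈ p, v ∈ W) :
    ColliderAt (Restrict E W) p i ↔ ColliderAt E p i := by
  constructor
  · rintro ⟨hi, u, v, w, hu, hv, hw, huv, hwv⟩
    exact ⟨hi, u, v, w, hu, hv, hw, huv.1, hwv.1⟩
  · rintro ⟨hi, u, v, w, hu, hv, hw, huv, hwv⟩
    have mem {j : ℕ} {x : V} (hx : p[j]? = some x) : x ∈ W := hp x (List.mem_of_getElem? hx)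
    exact ⟨hi, u, v, w, hu, hv, hw, ⟨huv, mem hu, mem hv⟩, ⟨hwv, mem hw, mem hv⟩⟩

theorem Unidirectional.descendant_mem (hW : Unidirectional E Wᶜ W) (hv : v ∈ W)
    (h : Descendant E v d) : d ∈ W := by
  induction h with
  | refl => exact hv
  | tail _ hE hu => exact by_contra fun hd => hW _ hd _ hu hE

theorem Unidirectional.descendant_restrict_iff (hW : Unidirectional E Wᶜ W) (hv : v ∈ W) :
    Descendant (Restrict E W) v d ↔ Descendant E v d := by
  refine ⟨Relation.ReflTransGen.mono (fun _ _ h => h.1) _ _, fun h => ?_⟩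
  induction h with
  | refl => exact .refl
  | tail hvu hE ih =>
    exact ih.tail ⟨hE, hW.descendant_mem hv hvu, hW.descendant_mem hv (hvu.tail hE)⟩

theorem Unidirectional.blocked_restrict_iff (hW : Unidirectional E Wᶜ W)
    (hp : ∀ v ∈ p, v ∈ W) : Blocked (Restrict E W) S p ↔ Blocked E S p := by
  simp only [Blocked, NonColliderAt, colliderAt_restrict_iff hp]
  refine or_congr_right (exists₂_congr fun i v => and_congr_right fun _ =>
    and_congr_right fun hv => forall_congr' fun d => imp_congr_left ?_)
  exact hW.descendant_restrict_iff (hp v (List.mem_of_getElem? hv))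

theorem Unidirectional.blocked_congr (hW : Unidirectional E Wᶜ W) (hp : ∀ v ∈ p, v ∈ W)
    (hST : ∀ v ∈ W, v ∈ S ↔ v ∈ T) : Blocked E S p ↔ Blocked E T p := by
  have mem {i : ℕ} {v : V} (hv : p[i]? = some v) : v ∈ W := hp v (List.mem_of_getElem? hv)
  refine or_congr ?_ ?_ <;>
    refine exists₂_congr fun i v => and_congr_right fun _ => and_congr_right fun hv => ?_
  · exact hST v (mem hv)
  · exact forall₂_congr fun d hd => not_congr (hST d (hW.descendant_mem (mem hv) hd))

theorem IsPath.exists_exit (h : IsPath E p a b) (ha : a ∈ W) (hp : ∃ v ∈ Wᶜ, v ∈ p) :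
    ∃ i u v, p[i]? = some u ∧ p[i + 1]? = some v ∧ u ∈ W ∧ v ∉ W := by
  let Outside (i : ℕ) : Prop := ∃ v, p[i]? = some v ∧ v ∉ W
  have not_outside_zero : ¬ Outside 0 := by
    rintro ⟨v, hv, hvW⟩
    rw [← List.head?_eq_getElem?, h.2.2.1, Option.some.injEq] at hv
    exact hvW (hv ▸ ha)
  have exists_outside : ∃ i, Outside i := by
    obtain ⟨v, hvW, hv⟩ := hp
    obtain ⟨i, hi⟩ := List.mem_iff_getElem?.1 hv
    exact ⟨i, v, hi, hvW⟩
  obtain ⟨i, hi, v, hv, hvW⟩ :=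
    Nat.exists_not_and_succ_of_not_zero_of_exists not_outside_zero exists_outside
  have hlt : i < p.length := Nat.lt_of_succ_lt (List.getElem?_eq_some_iff.1 hv).1
  have hu : p[i]? = some p[i] := List.getElem?_eq_getElem hlt
  exact ⟨i, p[i], v, hu, hv, by_contra fun huW => hi ⟨_, hu, huW⟩, hvW⟩

theorem IsPath.add_one_lt_length_of_ne (h : IsPath E p a b) (hv : p[i]? = some v) (hvb : v ≠ b) :
    i + 1 < p.length := by
  have hi : i < p.length := (List.getElem?_eq_some_iff.1 hv).1
  by_contra hlast
  have hb : p[p.length - 1]? = some b := List.getLast?_eq_getElem? ▸ h.2.2.2.1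
  rw [show p.length - 1 = i by omega, hv, Option.some.injEq] at hb
  exact hvb hb

theorem Unidirectional.blocked_of_compl_subset (hW : Unidirectional E Wᶜ W) (hT : Wᶜ ⊆ T)
    (ha : a ∈ W) (hb : b ∈ W) (h : IsPath E p a b) (hp : ∃ v ∈ Wᶜ, v ∈ p) : Blocked E T p := by
  obtain ⟨i, u, v, hu, hv, huW, hvW⟩ := h.exists_exit ha hp
  have interior : Interior p (i + 1) :=
    ⟨i.succ_pos, h.add_one_lt_length_of_ne hv fun hvb => hvW (hvb ▸ hb)⟩
  have not_collider : ¬ ColliderAt E p (i + 1) := by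
    rintro ⟨-, u', v', -, hu', hv', -, hE, -⟩
    obtain rfl : u = u' := Option.some.inj (hu.symm.trans hu')
    obtain rfl : v = v' := Option.some.inj (hv.symm.trans hv')
    exact hW v hvW u huW hE
  exact .inl ⟨i + 1, v, ⟨interior, not_collider⟩, hv, hT hvW⟩

theorem Unidirectional.dSep_union_compl_iff (hW : Unidirectional E Wᶜ W) (ha : a ∈ W)
    (hb : b ∈ W) : DSep E (S ∪ Wᶜ) a b ↔ DSep (Restrict E W) S a b := by
  have blocked_iff {p : List V} (hp : ∀ v ∈ p, v ∈ W) :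
      Blocked E (S ∪ Wᶜ) p ↔ Blocked (Restrict E W) S p :=
    (hW.blocked_congr hp fun v hv => by simp [hv]).trans (hW.blocked_restrict_iff hp).symm
  constructor
  · intro h p hpath
    obtain ⟨hpath, hp⟩ := isPath_restrict_iff.1 hpath
    exact (blocked_iff hp).1 (h p hpath)
  · intro h p hpath
    by_cases hp : ∀ v ∈ p, v ∈ W
    · exact (blocked_iff hp).2 (h p (isPath_restrict_iff.2 ⟨hpath, hp⟩))
    · push Not at hp
      exact hW.blocked_of_compl_subset Set.subset_union_right ha hb hpath
        (hp.imp fun _ => And.symm)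

theorem stmt_10_general {Xs Ys : Set V} (hXY : IsCompl Xs Ys) (huni : Unidirectional E Xs Ys)
    (ha : a ∈ Ys) (hb : b ∈ Ys) :
    (¬ DSep E S a b ∧ DSep E (S ∪ Xs) a b) ↔
      ∃ p : List V, DSep (Restrict E Ys) S a b ∧
        IsPath E p a b ∧ ¬ Blocked E S p ∧ ∃ v ∈ Xs, v ∈ p := by
  obtain rfl : Xs = Ysᶜ := hXY.eq_compl
  rw [huni.dSep_union_compl_iff ha hb]
  constructor
  · rintro ⟨hE, hY⟩
    obtain ⟨p, hpath, hpS⟩ : ∃ p, IsPath E p a b ∧ ¬ Blocked E S p := by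
      simpa only [DSep, not_forall, exists_prop] using hE
    refine ⟨p, hY, hpath, hpS, ?_⟩
    by_contra! hp
    replace hp : ∀ v ∈ p, v ∈ Ys := fun v hv => by_contra fun hvY => hp v hvY hv
    exact hpS ((huni.blocked_restrict_iff hp).1 (hY p (isPath_restrict_iff.2 ⟨hpath, hp⟩)))
  · rintro ⟨p, hY, hpath, hpS, -⟩
    exact ⟨fun h => hpS (h p hpath), hY⟩

end

/-- Lemma 4, graphical characterization of Condition (C2). -/
theorem stmt_10 {V : Type*} [Fintype V] (E : V → V → Prop) (Xs Ys : Set V)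
    (hcover : Xs ∪ Ys = Set.univ) (hdisj : Disjoint Xs Ys)
    (hXne : Xs.Nonempty) (hYne : Ys.Nonempty)
    (hirr : Irreflexive E) (hacyc : Acyclic E)
    (huni : Unidirectional E Xs Ys) :
    (∃ Yk Yl : V, Yk ∈ Ys ∧ Yl ∈ Ys ∧ Yk ≠ Yl ∧ ∃ S ⊆ Ys \ {Yk, Yl},
        ¬ DSep E S Yk Yl ∧ DSep E (S ∪ Xs) Yk Yl) ↔
    (∃ Yk Yl : V, Yk ∈ Ys ∧ Yl ∈ Ys ∧ Yk ≠ Yl ∧ ∃ S ⊆ Ys \ {Yk, Yl}, ∃ p : List V,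
        -- (i) S d-separates Yk and Yl in the induced subgraph of the DAG on Ys
        DSep (Restrict E Ys) S Yk Yl ∧
        -- (ii) p is a path unblocked by S in the full graph, passing through Xs
        IsPath E p Yk Yl ∧ ¬ Blocked E S p ∧ (∃ v ∈ Xs, v ∈ p)) := by
  exact exists₂_congr fun _ _ => and_congr_right fun hk => and_congr_right fun hl =>
    and_congr_right fun _ => exists_congr fun _ => and_congr_right fun _ =>
      stmt_10_general ⟨hdisj, codisjoint_iff.2 hcover⟩ huni hk hl

end VecCI
end
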